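/- Let G be a doubly regular tournament on v = 4m−1 vertices (m ≥ 1) containing a transitive subtournament of size s, and let ε = √(1+12m) − ⌊√(1+12m)⌋. If ε ≠ 0 and ⌊√(1+12m)⌋ > (−1 + √(1+48m))/2, then s ≤ −2 + ⌊√(1+12m)⌋. -/

import Mathlib

open Matrix Finset

/-- A digraph on `v` vertices, given by its adjacency matrix: entries in `{0,1}`, zero diagonal. -/
def IsDigraph {v : ℕ} (A : Matrix (Fin v) (Fin v) ℂ) : Prop :=
  (∀ x y, A x y = 0 ∨ A x y = 1) ∧ ∀ x, A x x = 0

/-- A tournament: a digraph with `A + Aᵀ = J - I`. -/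
def IsTournament {v : ℕ} (A : Matrix (Fin v) (Fin v) ℂ) : Prop :=
  IsDigraph A ∧ A + Aᵀ = Matrix.of (fun _ _ => 1) - 1

/-- A doubly regular tournament: every vertex dominates exactly `(v-1)/2` vertices and every
pair of distinct vertices jointly dominates exactly `(v-3)/4` vertices (so `v ≡ 3 (mod 4)`). -/
def IsDRT {v : ℕ} (A : Matrix (Fin v) (Fin v) ℂ) : Prop :=
  IsTournament A ∧ v % 4 = 3 ∧
  (∀ x, (univ.filter fun y => A x y = 1).card = (v - 1) / 2) ∧
  (∀ x y, x ≠ y → (univ.filter fun z => A x z = 1 ∧ A y z = 1).card = (v - 3) / 4)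

/-- `T` is a transitive subtournament of the digraph with adjacency matrix `A`. -/
def IsTransSubtournament {v : ℕ} (A : Matrix (Fin v) (Fin v) ℂ) (T : Finset (Fin v)) : Prop :=
  (∀ x ∈ T, ∀ y ∈ T, x ≠ y → Xor' (A x y = 1) (A y x = 1)) ∧
  (∀ x ∈ T, ∀ y ∈ T, ∀ z ∈ T, A x y = 1 → A y z = 1 → A x z = 1)

/-!
For a vertex `z` let `a z` be the number of elements of `T` that dominate `z`, and let `s = #T`.
Double counting pairs `(x, z)` and triples `(x, y, z)` with `x, y ∈ T` dominating `z` gives the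
first two moments of `a` over all vertices, whence `∑ z, (2 * a z - s) ^ 2 = s * (4 * m - s)`.
On `T` itself `a` takes the values `0, …, s - 1` once each, so that the vertices of `T` alone
contribute `s * (s ^ 2 + 2) / 3` to this sum. Comparing the two yields
`(s + 1) * (s + 2) ≤ 12 * m`, while the hypothesis on `f = ⌊√(1 + 12 * m)⌋` says that
`12 * m < f * (f + 1)`; hence `s + 1 < f`.
-/

section DoubleCounting

variable {α β : Type*} {r : α → β → Prop} [DecidableRel r]

theorem bipartiteBelow_offDiag (S : Finset α) (z : β) :
    S.offDiag.bipartiteBelow (fun p z => r p.1 z ∧ r p.2 z) z = (S.bipartiteBelow r z).offDiag := by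
  ext p
  simp only [mem_bipartiteBelow, mem_offDiag]
  tauto

theorem cast_card_offDiag (S : Finset α) : (#S.offDiag : ℤ) = #S * (#S - 1) := by
  rw [offDiag_card, Nat.cast_sub (Nat.le_mul_self _)]
  push_cast
  ring

variable [Fintype β] {S : Finset α} {k l : ℕ}

theorem sum_card_bipartiteBelow_eq_card_mul (hk : ∀ x ∈ S, #{z | r x z} = k) :
    ∑ z, #(S.bipartiteBelow r z) = #S * k := by
  rw [← sum_card_bipartiteAbove_eq_sum_card_bipartiteBelow]
  exact sum_const_nat hk

theorem sum_card_offDiag_bipartiteBelow_eq_card_mul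
    (hl : ∀ x ∈ S, ∀ y ∈ S, x ≠ y → #{z | r x z ∧ r y z} = l) :
    ∑ z, #(S.bipartiteBelow r z).offDiag = #S.offDiag * l := by
  simp_rw [← bipartiteBelow_offDiag]
  rw [← sum_card_bipartiteAbove_eq_sum_card_bipartiteBelow]
  refine sum_const_nat fun p hp => ?_
  obtain ⟨hx, hy, hxy⟩ := mem_offDiag.1 hp
  exact hl _ hx _ hy hxy

theorem sum_two_mul_card_bipartiteBelow_sub_sq (hk : ∀ x ∈ S, #{z | r x z} = k)
    (hl : ∀ x ∈ S, ∀ y ∈ S, x ≠ y → #{z | r x z ∧ r y z} = l) (c : ℤ) :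
    ∑ z, (2 * (#(S.bipartiteBelow r z) : ℤ) - c) ^ 2 =
      4 * (#S * (#S - 1) * l) + 4 * (1 - c) * (#S * k) + Fintype.card β * c ^ 2 := by
  have first_moment : ∑ z, (#(S.bipartiteBelow r z) : ℤ) = #S * k :=
    mod_cast sum_card_bipartiteBelow_eq_card_mul hk
  have second_moment : ∑ z, (#(S.bipartiteBelow r z).offDiag : ℤ) = #S * (#S - 1) * l := by
    rw [← cast_card_offDiag]
    exact mod_cast sum_card_offDiag_bipartiteBelow_eq_card_mul hl
  calc ∑ z, (2 * (#(S.bipartiteBelow r z) : ℤ) - c) ^ 2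
    _ = ∑ z, (4 * (#(S.bipartiteBelow r z).offDiag : ℤ) +
          4 * (1 - c) * #(S.bipartiteBelow r z) + c ^ 2) := by
      refine sum_congr rfl fun z _ => ?_
      rw [cast_card_offDiag]
      ring
    _ = _ := by
      rw [sum_add_distrib, sum_add_distrib, ← mul_sum, ← mul_sum, first_moment, second_moment,
        sum_const, card_univ, nsmul_eq_mul]

end DoubleCounting

theorem three_mul_sum_range_two_mul_sub_sq (n : ℕ) (c : ℤ) :
    3 * ∑ i ∈ range n, (2 * (i : ℤ) - c) ^ 2 =
      2 * n * (n - 1) * (2 * n - 1) - 6 * c * n * (n - 1) + 3 * n * c ^ 2 := by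
  induction n with
  | zero => simp
  | succ n ih =>
    rw [sum_range_succ, mul_add, ih]
    push_cast
    ring

theorem lt_mul_add_one_of_neg_one_add_sqrt_div_two_lt {x y : ℝ}
    (h : (-1 + √(1 + 4 * x)) / 2 < y) : x < y * (y + 1) := by
  have sqrt_lt : √(1 + 4 * x) < 2 * y + 1 := by linarith
  linarith [Real.lt_sq_of_sqrt_lt sqrt_lt]

section TransitiveTournament

variable {V : Type*} {r : V → V → Prop} {T : Finset V}

/-- The relation `r` restricts to a transitive tournament, i.e. a strict total order, on `T`. -/
structure IsTransitiveTournamentOn (r : V → V → Prop) (T : Finset V) : Prop where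
  irrefl : ∀ x ∈ T, ¬ r x x
  total : ∀ x ∈ T, ∀ y ∈ T, x ≠ y → r x y ∨ r y x
  trans : ∀ x ∈ T, ∀ y ∈ T, ∀ z ∈ T, r x y → r y z → r x z

namespace IsTransitiveTournamentOn

variable [DecidableRel r]

theorem card_bipartiteBelow_lt_of_rel (hT : IsTransitiveTournamentOn r T) {z w : V} (hz : z ∈ T)
    (hw : w ∈ T) (hzw : r z w) : #(T.bipartiteBelow r z) < #(T.bipartiteBelow r w) := by
  refine card_lt_card ((ssubset_iff_of_subset fun x hx => ?_).2 ⟨z, ?_, ?_⟩)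
  · obtain ⟨hxT, hxz⟩ := (mem_bipartiteBelow r).1 hx
    exact (mem_bipartiteBelow r).2 ⟨hxT, hT.trans x hxT z hz w hw hxz hzw⟩
  · exact (mem_bipartiteBelow r).2 ⟨hz, hzw⟩
  · exact fun h => hT.irrefl z hz ((mem_bipartiteBelow r).1 h).2

theorem injOn_card_bipartiteBelow (hT : IsTransitiveTournamentOn r T) :
    Set.InjOn (fun z => #(T.bipartiteBelow r z)) T := by
  intro z hz w hw heq
  by_contra hne
  rcases hT.total z hz w hw hne with hzw | hwz
  · exact (hT.card_bipartiteBelow_lt_of_rel hz hw hzw).ne heq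
  · exact (hT.card_bipartiteBelow_lt_of_rel hw hz hwz).ne' heq

theorem image_card_bipartiteBelow (hT : IsTransitiveTournamentOn r T) :
    T.image (fun z => #(T.bipartiteBelow r z)) = range #T := by
  refine eq_of_subset_of_card_le (image_subset_iff.2 fun z hz => mem_range.2 ?_) ?_
  · exact card_lt_card (filter_ssubset.2 ⟨z, hz, hT.irrefl z hz⟩)
  · rw [card_image_of_injOn hT.injOn_card_bipartiteBelow, card_range]

theorem sum_comp_card_bipartiteBelow {M : Type*} [AddCommMonoid M]
    (hT : IsTransitiveTournamentOn r T) (g : ℕ → M) :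
    ∑ z ∈ T, g #(T.bipartiteBelow r z) = ∑ i ∈ range #T, g i := by
  rw [← hT.image_card_bipartiteBelow, sum_image hT.injOn_card_bipartiteBelow]

theorem three_mul_sum_two_mul_card_bipartiteBelow_sub_card_sq
    (hT : IsTransitiveTournamentOn r T) :
    3 * ∑ z ∈ T, (2 * (#(T.bipartiteBelow r z) : ℤ) - #T) ^ 2 =
      (#T : ℤ) * ((#T : ℤ) ^ 2 + 2) := by
  rw [hT.sum_comp_card_bipartiteBelow fun i : ℕ => (2 * (i : ℤ) - #T) ^ 2,
    three_mul_sum_range_two_mul_sub_sq]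
  ring

end IsTransitiveTournamentOn

/-- The sets `{y | r x y}` are the blocks of a Hadamard design, a symmetric design with parameters
`(4m - 1, 2m - 1, m - 1)`. The parameters are stated with `+ 1` in place of truncated subtraction,
which forces `m ≠ 0`. The arcs of a doubly regular tournament are an example. -/
structure IsHadamardDesign [Fintype V] (r : V → V → Prop) [DecidableRel r] (m : ℕ) : Prop where
  card_add_one : Fintype.card V + 1 = 4 * m
  card_block_add_one : ∀ x, #{y | r x y} + 1 = 2 * m
  card_inter_add_one : ∀ x y, x ≠ y → #{z | r x z ∧ r y z} + 1 = m

variable [Fintype V] [DecidableRel r] {m : ℕ}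

theorem IsHadamardDesign.sum_two_mul_card_bipartiteBelow_sub_card_sq (hr : IsHadamardDesign r m)
    (T : Finset V) :
    ∑ z, (2 * (#(T.bipartiteBelow r z) : ℤ) - #T) ^ 2 = (#T : ℤ) * (4 * m - #T) := by
  have hcard := hr.card_add_one
  rw [sum_two_mul_card_bipartiteBelow_sub_sq (k := 2 * m - 1) (l := m - 1)
      (fun x _ => by have := hr.card_block_add_one x; omega)
      (fun x _ y _ hxy => by have := hr.card_inter_add_one x y hxy; omega),
    show ((2 * m - 1 : ℕ) : ℤ) = 2 * m - 1 by omega, show ((m - 1 : ℕ) : ℤ) = m - 1 by omega,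
    show (Fintype.card V : ℤ) = 4 * m - 1 by omega]
  ring

theorem IsTransitiveTournamentOn.card_add_one_mul_card_add_two_le
    (hT : IsTransitiveTournamentOn r T) (hr : IsHadamardDesign r m) :
    (#T + 1) * (#T + 2) ≤ 12 * m := by
  rcases T.eq_empty_or_nonempty with rfl | hne
  · have := hr.card_add_one
    rw [card_empty]
    omega
  have sum_le : ∑ z ∈ T, (2 * (#(T.bipartiteBelow r z) : ℤ) - #T) ^ 2 ≤
      (#T : ℤ) * (4 * m - #T) := by
    rw [← hr.sum_two_mul_card_bipartiteBelow_sub_card_sq]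
    exact sum_le_univ_sum_of_nonneg fun _ => sq_nonneg _
  have card_mul_le : (#T : ℤ) * (#T ^ 2 + 2) ≤ (#T : ℤ) * (3 * (4 * m - #T)) := by
    linarith [hT.three_mul_sum_two_mul_card_bipartiteBelow_sub_card_sq]
  have card_pos : (0 : ℤ) < #T := mod_cast hne.card_pos
  zify
  linarith [le_of_mul_le_mul_left card_mul_le card_pos]

theorem drt_bound_large_floor_case_general {f : ℤ}
    (hr : IsHadamardDesign r m) (hT : IsTransitiveTournamentOn r T)
    (hf : (-1 + √(1 + 48 * (m : ℝ))) / 2 < f) : (#T : ℝ) ≤ -2 + f := by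
  have lt_f_mul : 12 * (m : ℤ) < f * (f + 1) := by
    rw [show 48 * (m : ℝ) = 4 * (12 * m) by ring] at hf
    exact mod_cast lt_mul_add_one_of_neg_one_add_sqrt_div_two_lt hf
  have card_mul_le : ((#T : ℤ) + 1) * (#T + 2) ≤ 12 * m :=
    mod_cast hT.card_add_one_mul_card_add_two_le hr
  have f_pos : 0 < f := by
    have one_le_sqrt : 1 ≤ √(1 + 48 * (m : ℝ)) :=
      Real.one_le_sqrt.2 (by linarith [m.cast_nonneg (α := ℝ)])
    exact_mod_cast (by linarith : (0 : ℝ) < f)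
  have card_add_one_lt : (#T : ℤ) + 1 < f := by nlinarith
  exact_mod_cast (by omega : (#T : ℤ) ≤ -2 + f)

end TransitiveTournament

/-- The arc relation of the digraph with adjacency matrix `A`. -/
def Dominates {v : ℕ} (A : Matrix (Fin v) (Fin v) ℂ) (x y : Fin v) : Prop :=
  A x y = 1

noncomputable instance {v : ℕ} (A : Matrix (Fin v) (Fin v) ℂ) : DecidableRel (Dominates A) :=
  fun x y => inferInstanceAs (Decidable (A x y = 1))

theorem IsDRT.isHadamardDesign {m : ℕ} {A : Matrix (Fin (4 * m - 1)) (Fin (4 * m - 1)) ℂ}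
    (hA : IsDRT A) : IsHadamardDesign (Dominates A) m := by
  obtain ⟨-, hmod, card_out, card_common_out⟩ := hA
  refine ⟨?_, fun x => ?_, fun x y hxy => ?_⟩
  · rw [Fintype.card_fin]
    omega
  · have : #{y | Dominates A x y} = _ := card_out x
    omega
  · have : #{z | Dominates A x z ∧ Dominates A y z} = _ := card_common_out x y hxy
    omega

theorem IsTransSubtournament.isTransitiveTournamentOn {v : ℕ} {A : Matrix (Fin v) (Fin v) ℂ}
    {T : Finset (Fin v)} (hT : IsTransSubtournament A T) (hA : IsDigraph A) :
    IsTransitiveTournamentOn (Dominates A) T where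
  irrefl x _ := by simp [Dominates, hA.2 x]
  total x hx y hy hxy := Xor.or (hT.1 x hx y hy hxy)
  trans := hT.2

/-- If a doubly regular tournament on `v = 4m-1` vertices contains a transitive
subtournament of size `s`, `√(1+12m)` is not an integer and
`⌊√(1+12m)⌋ > (-1 + √(1+48m))/2`, then `s ≤ -2 + ⌊√(1+12m)⌋`. -/
theorem drt_bound_large_floor_case
    {m s : ℕ} (hm : 1 ≤ m)
    (A : Matrix (Fin (4 * m - 1)) (Fin (4 * m - 1)) ℂ) (hA : IsDRT A)
    (T : Finset (Fin (4 * m - 1))) (hT : IsTransSubtournament A T) (hTcard : T.card = s)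
    (heps : Real.sqrt (1 + 12 * (m : ℝ)) - (⌊Real.sqrt (1 + 12 * (m : ℝ))⌋ : ℝ) ≠ 0)
    (hgt : ((⌊Real.sqrt (1 + 12 * (m : ℝ))⌋ : ℝ)) > (-1 + Real.sqrt (1 + 48 * (m : ℝ))) / 2) :
    (s : ℝ) ≤ -2 + (⌊Real.sqrt (1 + 12 * (m : ℝ))⌋ : ℝ) := by
  subst hTcard
  exact drt_bound_large_floor_case_general hA.isHadamardDesign
    (hT.isTransitiveTournamentOn hA.1.1) hgt
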